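/- The functional H̃ : ℝ^E → ℝ is C¹-smooth and convex, and ∂H̃/∂l_e(l) = −K̃_e(l) for all l ∈ ℝ^E and all e ∈ E; consequently, l ∈ ℝ^E is a zero-curvature generalized decorated metric (K̃(l) = 0) if and only if l is a critical point of H̃. -/

import Mathlib

noncomputable section

open Real Set Filter

/-- The generalized Euclidean triangle angle `aᵢ(x)` opposite the side of length `x i`,
for a generalized triangle with (positive) side lengths `x 0, x 1, x 2`:
it is `π` if `x i ≥ x j + x k`, `0` if some other side is at least the sum of the
remaining two, and otherwise the usual Euclidean angle `arccos((xⱼ²+x_k²−xᵢ²)/(2xⱼx_k))`. -/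
noncomputable def genAngle (x : Fin 3 → ℝ) (i : Fin 3) : ℝ :=
  if x (i + 1) + x (i + 2) ≤ x i then Real.pi
  else if x i + x (i + 2) ≤ x (i + 1) ∨ x i + x (i + 1) ≤ x (i + 2) then 0
  else Real.arccos
    ((x (i + 1) ^ 2 + x (i + 2) ^ 2 - x i ^ 2) / (2 * x (i + 1) * x (i + 2)))

/-- The three side lengths `e^{(l₁₂+l₃₄)/2}, e^{(l₁₃+l₂₄)/2}, e^{(l₁₄+l₂₃)/2}` of the
generalized Euclidean triangle associated to a length vector `l ∈ ℝ⁶`.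
Edge indices: `0 ↔ {1,2}, 1 ↔ {1,3}, 2 ↔ {1,4}, 3 ↔ {2,3}, 4 ↔ {2,4}, 5 ↔ {3,4}`,
so opposite pairs of edges are `(0,5), (1,4), (2,3)`. -/
noncomputable def triSides (l : Fin 6 → ℝ) (k : Fin 3) : ℝ :=
  if k.val = 0 then Real.exp ((l 0 + l 5) / 2)
  else if k.val = 1 then Real.exp ((l 1 + l 4) / 2)
  else Real.exp ((l 2 + l 3) / 2)

/-- The quad (pair of opposite edges) containing the edge `p`. -/
def quadIndex (p : Fin 6) : Fin 3 :=
  if p.val = 0 ∨ p.val = 5 then 0 else if p.val = 1 ∨ p.val = 4 then 1 else 2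

/-- The extended dihedral angle `α_p(l)` of the generalized decorated tetrahedron with
length vector `l ∈ ℝ⁶` at the edge `p`. -/
noncomputable def dihedral (l : Fin 6 → ℝ) (p : Fin 6) : ℝ :=
  genAngle (triSides l) (quadIndex p)

/-- The edge index in `Fin 6` of the edge `{i,j}` of the tetrahedron on vertices `Fin 4`
(junk value for `i = j`). -/
def edgeOf (i j : Fin 4) : Fin 6 :=
  if (i.val = 0 ∧ j.val = 1) ∨ (i.val = 1 ∧ j.val = 0) then 0
  else if (i.val = 0 ∧ j.val = 2) ∨ (i.val = 2 ∧ j.val = 0) then 1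
  else if (i.val = 0 ∧ j.val = 3) ∨ (i.val = 3 ∧ j.val = 0) then 2
  else if (i.val = 1 ∧ j.val = 2) ∨ (i.val = 2 ∧ j.val = 1) then 3
  else if (i.val = 1 ∧ j.val = 3) ∨ (i.val = 3 ∧ j.val = 1) then 4
  else 5

/-- The two endpoints of the edge `p` of the tetrahedron. -/
def endPts (p : Fin 6) : Fin 4 × Fin 4 :=
  if p.val = 0 then (0, 1) else if p.val = 1 then (0, 2) else if p.val = 2 then (0, 3)
  else if p.val = 3 then (1, 2) else if p.val = 4 then (1, 3) else (2, 3)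

/-- The Lobachevsky function `Λ(x) = −∫₀ˣ ln|2 sin t| dt`. -/
noncomputable def lob (x : ℝ) : ℝ := -∫ t in (0:ℝ)..x, Real.log |2 * Real.sin t|

/-- The volume of the generalized decorated tetrahedron with length vector `l`. -/
noncomputable def vol6 (l : Fin 6 → ℝ) : ℝ := (1 / 2 : ℝ) * ∑ p : Fin 6, lob (dihedral l p)

/-- The co-volume function `cov(l) = 2 vol(l) + Σ α_p(l) l_p` on `ℝ⁶`. -/
noncomputable def cov6 (l : Fin 6 → ℝ) : ℝ := 2 * vol6 l + ∑ p : Fin 6, dihedral l p * l p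

/-- `𝓛 ⊂ ℝ⁶`: length vectors of genuine decorated ideal hyperbolic tetrahedra, i.e. those
whose associated generalized Euclidean triangle satisfies the strict triangle inequalities. -/
def Ldom : Set (Fin 6 → ℝ) :=
  {l | ∀ i : Fin 3, triSides l i < triSides l (i + 1) + triSides l (i + 2)}

/-- The action of `w ∈ ℝ⁴` on `l ∈ ℝ⁶`: `(w + l)_{ij} = l_{ij} + wᵢ + wⱼ`. -/
def act (w : Fin 4 → ℝ) (l : Fin 6 → ℝ) : Fin 6 → ℝ :=
  fun p => l p + w (endPts p).1 + w (endPts p).2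

/-- `ℝ̂⁴ = {w + 0 : w ∈ ℝ⁴} ⊂ ℝ⁶`. -/
def hatR4 : Set (Fin 6 → ℝ) := {x | ∃ w : Fin 4 → ℝ, x = act w 0}

/-- `i, j, k, h` are pairwise distinct, i.e. `{i,j,k,h} = {1,2,3,4}`. -/
def Distinct4 (i j k h : Fin 4) : Prop :=
  i ≠ j ∧ i ≠ k ∧ i ≠ h ∧ j ≠ k ∧ j ≠ h ∧ k ≠ h

variable {T E : Type*}

/-- The length vector in `ℝ⁶` induced on the tetrahedron `σ` by a metric `l : E → ℝ`. -/
def pullback (glue : T → Fin 6 → E) (l : E → ℝ) (σ : T) : Fin 6 → ℝ :=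
  fun p => l (glue σ p)

/-- The generalized Ricci curvature `K̃_e(l) = 2π − Σ_{σ} Σ_{p : glue σ p = e} α_p(l_σ)`. -/
noncomputable def Ric [Fintype T] [DecidableEq E] (glue : T → Fin 6 → E) (l : E → ℝ)
    (e : E) : ℝ :=
  2 * Real.pi -
    ∑ σ : T, ∑ p : Fin 6, if glue σ p = e then dihedral (pullback glue l σ) p else 0

/-- `𝓛(M,𝒯)`: the set of decorated hyperbolic polyhedral metrics. -/
def LMdom (glue : T → Fin 6 → E) : Set (E → ℝ) := {l | ∀ σ : T, pullback glue l σ ∈ Ldom}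

/-- `H̃(l) = Σ_σ cov(l_σ) − 2π Σ_e l_e`. -/
noncomputable def Htilde [Fintype T] [Fintype E] (glue : T → Fin 6 → E) (l : E → ℝ) : ℝ :=
  ∑ σ : T, cov6 (pullback glue l σ) - 2 * Real.pi * ∑ e : E, l e

/-- The valence `d_e` of an edge `e`: the number of pairs `(σ, p)` glued to `e`. -/
def valence [Fintype T] [DecidableEq E] (glue : T → Fin 6 → E) (e : E) : ℕ :=
  ∑ σ : T, ∑ p : Fin 6, if glue σ p = e then 1 else 0

/-- `(M,𝒯)` is edge-transitive: any edge can be mapped to any other edge by an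
automorphism of the triangulation. -/
def EdgeTransitive (glue : T → Fin 6 → E) : Prop :=
  ∀ e e' : E, ∃ (φ : T ≃ T) (ψ : E ≃ E) (ρ : T → Fin 4 ≃ Fin 4),
    (∀ (σ : T) (i j : Fin 4), i ≠ j →
      glue (φ σ) (edgeOf (ρ σ i) (ρ σ j)) = ψ (glue σ (edgeOf i j))) ∧ ψ e = e'
lemma aux_integrable (a b : ℝ) :
    IntervalIntegrable (fun t => Real.log |2 * Real.sin t|) MeasureTheory.volume a b := by
  have h : AnalyticOnNhd ℝ (fun t : ℝ => 2 * Real.sin t) univ := by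
    intro x _
    fun_prop
  have h2 : MeromorphicOn (fun t : ℝ => 2 * Real.sin t) (uIcc a b) :=
    fun x _ => (h x (mem_univ x)).meromorphicAt
  simpa [Real.log_abs, Real.norm_eq_abs] using h2.intervalIntegrable_log_norm

lemma lob_continuous : Continuous lob := by
  unfold lob
  exact (intervalIntegral.continuous_primitive (fun a b => aux_integrable a b) 0).neg

lemma lob_hasDerivAt {x : ℝ} (h0 : 0 < Real.sin x) :
    HasDerivAt lob (-(Real.log 2 + Real.log (Real.sin x))) x := by
  have hc : ContinuousAt (fun t => Real.log |2 * Real.sin t|) x := by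
    apply ContinuousAt.log
    · fun_prop
    · simp [h0.ne']
  have hm : StronglyMeasurableAtFilter (fun t => Real.log |2 * Real.sin t|) (nhds x)
      MeasureTheory.volume := by
    have hme : Measurable (fun t => Real.log |2 * Real.sin t|) := by fun_prop
    exact ⟨univ, univ_mem, hme.aestronglyMeasurable⟩
  have := (intervalIntegral.integral_hasDerivAt_right (aux_integrable 0 x) hm hc).neg
  rw [Real.log_abs, Real.log_mul two_ne_zero h0.ne'] at this
  exact this

/-! ### Triangle angles -/

/-- The angle opposite to `a`, via the clamped `arccos`. -/
def ang (a b c : ℝ) : ℝ := Real.arccos ((b ^ 2 + c ^ 2 - a ^ 2) / (2 * b * c))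

lemma ang_comm (a b c : ℝ) : ang a b c = ang a c b := by
  unfold ang; congr 1; ring

lemma ang_eq_pi {a b c : ℝ} (hb : 0 < b) (hc : 0 < c) (h : b + c ≤ a) :
    ang a b c = Real.pi := by
  apply Real.arccos_of_le_neg_one
  rw [div_le_iff₀ (by positivity)]
  nlinarith

lemma ang_eq_zero {a b c : ℝ} (ha : 0 < a) (hb : 0 < b) (hc : 0 < c) (h : a + c ≤ b) :
    ang a b c = 0 := by
  apply Real.arccos_of_one_le
  rw [le_div_iff₀ (by positivity)]
  nlinarith

lemma genAngle_eq (x : Fin 3 → ℝ) (hx : ∀ i, 0 < x i) (i : Fin 3) :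
    genAngle x i = ang (x i) (x (i + 1)) (x (i + 2)) := by
  unfold genAngle
  split_ifs with h1 h2
  · rw [ang_eq_pi (hx _) (hx _) h1]
  · rcases h2 with h2 | h2
    · rw [ang_eq_zero (hx _) (hx _) (hx _) h2]
    · rw [ang_comm, ang_eq_zero (hx _) (hx _) (hx _) h2]
  · rfl

/-- Sixteen times the squared area. -/
def heron (a b c : ℝ) : ℝ := (a + b + c) * (b + c - a) * (a + c - b) * (a + b - c)

lemma heron_pos {a b c : ℝ} (ha : 0 < a) (hb : 0 < b) (hc : 0 < c)
    (h1 : a < b + c) (h2 : b < a + c) (h3 : c < a + b) : 0 < heron a b c := by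
  have := sub_pos.2 h1
  have := sub_pos.2 h2
  have := sub_pos.2 h3
  unfold heron
  positivity

lemma sin_ang {a b c : ℝ} (ha : 0 < a) (hb : 0 < b) (hc : 0 < c) :
    Real.sin (ang a b c) = a * (√(heron a b c) / (2 * a * b * c)) := by
  unfold ang
  rw [Real.sin_arccos]
  have : 1 - ((b ^ 2 + c ^ 2 - a ^ 2) / (2 * b * c)) ^ 2 = heron a b c / (2 * b * c) ^ 2 := by
    unfold heron; field_simp; ring
  rw [this, Real.sqrt_div' _ (by positivity), Real.sqrt_sq (by positivity)]
  field_simp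

lemma cos_ang {a b c : ℝ} (hb : 0 < b) (hc : 0 < c)
    (h1 : a < b + c) (h2 : b < a + c) (h3 : c < a + b) :
    Real.cos (ang a b c) = (b ^ 2 + c ^ 2 - a ^ 2) / (2 * b * c) := by
  unfold ang
  apply Real.cos_arccos
  · rw [le_div_iff₀ (by positivity)]
    nlinarith
  · rw [div_le_iff₀ (by positivity)]
    nlinarith

lemma ang_pos_lt {a b c : ℝ} (ha : 0 < a) (hb : 0 < b) (hc : 0 < c)
    (h1 : a < b + c) (h2 : b < a + c) (h3 : c < a + b) :
    0 < ang a b c ∧ ang a b c < Real.pi := by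
  have hs : 0 < Real.sin (ang a b c) := by
    rw [sin_ang ha hb hc]
    have := Real.sqrt_pos.2 (heron_pos ha hb hc h1 h2 h3)
    positivity
  have h0 : 0 ≤ ang a b c := Real.arccos_nonneg _
  have hp : ang a b c ≤ Real.pi := Real.arccos_le_pi _
  constructor
  · rcases h0.lt_or_eq with h | h
    · exact h
    · rw [← h] at hs; simp at hs
  · rcases hp.lt_or_eq with h | h
    · exact h
    · rw [h] at hs; simp at hs

lemma ang_sum_nondeg {a b c : ℝ} (ha : 0 < a) (hb : 0 < b) (hc : 0 < c)
    (h1 : a < b + c) (h2 : b < a + c) (h3 : c < a + b) :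
    ang a b c + ang b c a + ang c a b = Real.pi := by
  have hA := ang_pos_lt ha hb hc h1 h2 h3
  have hB := ang_pos_lt hb hc ha (by linarith) (by linarith) (by linarith)
  have hC := ang_pos_lt hc ha hb (by linarith) (by linarith) (by linarith)
  have cA := cos_ang hb hc h1 h2 h3
  have cB := cos_ang (a := b) hc ha (by linarith) (by linarith) (by linarith)
  have cC := cos_ang (a := c) ha hb (by linarith) (by linarith) (by linarith)
  have sA := sin_ang ha hb hc
  have sB := sin_ang hb hc ha
  have e1 : heron b c a = heron a b c := by unfold heron; ring
  rw [e1] at sB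
  have hH := heron_pos ha hb hc h1 h2 h3
  have hq := Real.sq_sqrt hH.le
  have hqp := Real.sqrt_pos.2 hH
  set S := √(heron a b c)
  set A := ang a b c
  set B := ang b c a
  set C := ang c a b
  have hcos : Real.cos (A + B) = Real.cos (Real.pi - C) := by
    rw [Real.cos_add, Real.cos_pi_sub, cA, cB, cC, sA, sB]
    have : a * (S / (2 * a * b * c)) * (b * (S / (2 * b * c * a)))
        = S ^ 2 / (4 * a * b * c ^ 2) := by field_simp; ring
    rw [this, hq]
    unfold heron
    field_simp
    ring
  have hsin : 0 < Real.sin (A + B) := by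
    rw [Real.sin_add, cA, cB, sA, sB]
    have : a * (S / (2 * a * b * c)) * ((c ^ 2 + a ^ 2 - b ^ 2) / (2 * c * a)) +
        (b ^ 2 + c ^ 2 - a ^ 2) / (2 * b * c) * (b * (S / (2 * b * c * a)))
        = S / (2 * a * b) := by field_simp; ring
    rw [this]
    positivity
  have hlt : A + B < Real.pi := by
    by_contra hcon
    push Not at hcon
    have : Real.sin (A + B - Real.pi) ≥ 0 :=
      Real.sin_nonneg_of_nonneg_of_le_pi (by linarith) (by linarith)
    rw [Real.sin_sub_pi] at this
    linarith
  have := Real.injOn_cos (x₁ := A + B) (x₂ := Real.pi - C)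
    ⟨by linarith, hlt.le⟩ ⟨by linarith, by linarith⟩ hcos
  linarith

lemma ang_sum {a b c : ℝ} (ha : 0 < a) (hb : 0 < b) (hc : 0 < c) :
    ang a b c + ang b c a + ang c a b = Real.pi := by
  by_cases h1 : b + c ≤ a
  · rw [ang_eq_pi hb hc h1, ang_comm b, ang_eq_zero hb ha hc h1,
      ang_eq_zero hc ha hb (by linarith)]
    ring
  by_cases h2 : c + a ≤ b
  · rw [ang_eq_pi hc ha h2, ang_comm c, ang_eq_zero hc hb ha h2,
      ang_eq_zero ha hb hc (by linarith)]
    ring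
  by_cases h3 : a + b ≤ c
  · rw [ang_eq_pi ha hb h3, ang_comm a, ang_eq_zero ha hc hb h3,
      ang_eq_zero hb hc ha (by linarith)]
    ring
  exact ang_sum_nondeg ha hb hc (by linarith) (by linarith) (by linarith)

/-! ### The variational principle -/

/-- The objective function. -/
def GG (x y z a b c : ℝ) : ℝ := lob a + lob b + lob c + a * x + b * y + c * z

lemma cot_form {a b c u v w : ℝ} (ha : 0 < Real.sin a) (hb : 0 < Real.sin b)
    (hc : 0 < Real.sin c) (hs : a + b + c = Real.pi) (hv : u + v + w = 0) :
    0 ≤ Real.cos a * u / Real.sin a * u + Real.cos b * v / Real.sin b * v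
      + Real.cos c * w / Real.sin c * w := by
  have hC : Real.sin c = Real.sin a * Real.cos b + Real.cos a * Real.sin b := by
    rw [← Real.sin_add, ← Real.sin_pi_sub]; congr 1; linarith
  have hD : Real.cos c = Real.sin a * Real.sin b - Real.cos a * Real.cos b := by
    have : c = Real.pi - (a + b) := by linarith
    rw [this, Real.cos_pi_sub, Real.cos_add]; ring
  have e1 := Real.sin_sq_add_cos_sq a
  have hw : w = -u - v := by linarith
  have key : Real.cos a * u / Real.sin a * u + Real.cos b * v / Real.sin b * v
      + Real.cos c * w / Real.sin c * w =
      ((Real.sin b * u + Real.cos c * Real.sin a * v) ^ 2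
        + (Real.sin a * Real.sin c * v) ^ 2) / (Real.sin a * Real.sin b * Real.sin c) := by
    rw [eq_div_iff (by positivity)]
    have : (Real.cos a * u / Real.sin a * u + Real.cos b * v / Real.sin b * v
      + Real.cos c * w / Real.sin c * w) * (Real.sin a * Real.sin b * Real.sin c)
      = Real.cos a * u ^ 2 * (Real.sin b * Real.sin c)
       + Real.cos b * v ^ 2 * (Real.sin a * Real.sin c)
       + Real.cos c * w ^ 2 * (Real.sin a * Real.sin b) := by
      field_simp
    rw [this, hw, hC, hD]
    generalize Real.sin a = s at *
    generalize Real.cos a = p at *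
    generalize Real.sin b = t at *
    generalize Real.cos b = q at *
    linear_combination (t ^ 2 * u ^ 2 - v ^ 2 * s ^ 2 * (t ^ 2 + q ^ 2)) * e1
  rw [key]
  positivity

lemma GG_le_nondeg {x y z a b c A B C k : ℝ} (hk : 0 < k)
    (hA : 0 < A) (hB : 0 < B) (hC : 0 < C) (hS : A + B + C = Real.pi)
    (sA : Real.sin A = Real.exp x * k) (sB : Real.sin B = Real.exp y * k)
    (sC : Real.sin C = Real.exp z * k)
    (ha : 0 ≤ a) (hb : 0 ≤ b) (hc : 0 ≤ c) (hs : a + b + c = Real.pi) :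
    GG x y z a b c ≤ GG x y z A B C := by
  have pos : ∀ {P Q R p q r t : ℝ}, 0 < P → 0 < Q → 0 < R → P + Q + R = Real.pi →
      0 ≤ p → 0 ≤ q → 0 ≤ r → p + q + r = Real.pi → 0 ≤ t → t < 1 →
      0 < Real.sin (P + t * (p - P)) := by
    intro P Q R p q r t hP hQ hR hPQR hp hq hr hpqr ht0 ht1
    have h1 : 0 < (1 - t) * P := mul_pos (by linarith) hP
    have h2 : 0 < (1 - t) * (Q + R) := mul_pos (by linarith) (by linarith)
    have h3 : 0 ≤ t * p := by positivity
    have h4 : 0 ≤ t * (q + r) := by positivity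
    apply Real.sin_pos_of_pos_of_lt_pi
    · nlinarith
    · nlinarith
  have pA : ∀ t, 0 ≤ t → t < 1 → 0 < Real.sin (A + t * (a - A)) := fun t h0 h1 =>
    pos hA hB hC hS ha hb hc hs h0 h1
  have pB : ∀ t, 0 ≤ t → t < 1 → 0 < Real.sin (B + t * (b - B)) := fun t h0 h1 =>
    pos hB hC hA (by linarith) hb hc ha (by linarith) h0 h1
  have pC : ∀ t, 0 ≤ t → t < 1 → 0 < Real.sin (C + t * (c - C)) := fun t h0 h1 =>
    pos hC hA hB (by linarith) hc ha hb (by linarith) h0 h1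
  have lin : ∀ P p t : ℝ, HasDerivAt (fun t : ℝ => P + t * (p - P)) (p - P) t := by
    intro P p t
    simpa using ((hasDerivAt_id t).mul_const (p - P)).const_add P
  -- the derivative of the logarithmic part
  let h : ℝ → ℝ := fun t => Real.log (Real.sin (A + t * (a - A))) * (a - A)
    + Real.log (Real.sin (B + t * (b - B))) * (b - B)
    + Real.log (Real.sin (C + t * (c - C))) * (c - C)
  have hh : ∀ t, 0 ≤ t → t < 1 → HasDerivAt h
      (Real.cos (A + t * (a - A)) * (a - A) / Real.sin (A + t * (a - A)) * (a - A)
      + Real.cos (B + t * (b - B)) * (b - B) / Real.sin (B + t * (b - B)) * (b - B)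
      + Real.cos (C + t * (c - C)) * (c - C) / Real.sin (C + t * (c - C)) * (c - C)) t := by
    intro t h0 h1
    exact (((((lin A a t).sin).log (pA t h0 h1).ne').mul_const _).add
      ((((lin B b t).sin).log (pB t h0 h1).ne').mul_const _)).add
      ((((lin C c t).sin).log (pC t h0 h1).ne').mul_const _)
  have hmono : MonotoneOn h (Ico 0 1) := by
    apply monotoneOn_of_deriv_nonneg (convex_Ico 0 1)
    · intro t ht
      exact (hh t ht.1 ht.2).continuousAt.continuousWithinAt
    · intro t ht
      rw [interior_Ico] at ht
      exact (hh t ht.1.le ht.2).differentiableAt.differentiableWithinAt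
    · intro t ht
      rw [interior_Ico] at ht
      rw [(hh t ht.1.le ht.2).deriv]
      apply cot_form (pA t ht.1.le ht.2) (pB t ht.1.le ht.2) (pC t ht.1.le ht.2)
      · linear_combination (1 - t) * hS + t * hs
      · linarith
  have h00 : h 0 = x * (a - A) + y * (b - B) + z * (c - C) := by
    simp only [h, zero_mul, add_zero, sA, sB, sC]
    rw [Real.log_mul (Real.exp_pos _).ne' hk.ne', Real.log_mul (Real.exp_pos _).ne' hk.ne',
      Real.log_mul (Real.exp_pos _).ne' hk.ne', Real.log_exp, Real.log_exp, Real.log_exp]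
    linear_combination Real.log k * hs - Real.log k * hS
  let g : ℝ → ℝ := fun t => GG x y z (A + t * (a - A)) (B + t * (b - B)) (C + t * (c - C))
  have hg : ∀ t, 0 ≤ t → t < 1 → HasDerivAt g
      (x * (a - A) + y * (b - B) + z * (c - C) - h t) t := by
    intro t h0 h1
    have d1 := (lob_hasDerivAt (pA t h0 h1)).comp t (lin A a t)
    have d2 := (lob_hasDerivAt (pB t h0 h1)).comp t (lin B b t)
    have d3 := (lob_hasDerivAt (pC t h0 h1)).comp t (lin C c t)
    have d := ((((d1.add d2).add d3).add ((lin A a t).mul_const x)).add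
      ((lin B b t).mul_const y)).add ((lin C c t).mul_const z)
    refine d.congr_deriv ?_
    simp only [h]
    linear_combination (-Real.log 2) * hs + Real.log 2 * hS
  have hanti : AntitoneOn g (Icc 0 1) := by
    apply antitoneOn_of_deriv_nonpos (convex_Icc 0 1)
    · apply Continuous.continuousOn
      have := lob_continuous
      simp only [g, GG]
      fun_prop
    · intro t ht
      rw [interior_Icc] at ht
      exact (hg t ht.1.le ht.2).differentiableAt.differentiableWithinAt
    · intro t ht
      rw [interior_Icc] at ht
      rw [(hg t ht.1.le ht.2).deriv]
      have := hmono (a := 0) (b := t) ⟨le_rfl, one_pos⟩ ⟨ht.1.le, ht.2⟩ ht.1.le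
      linarith
  have := hanti (a := 0) (b := 1) ⟨le_rfl, zero_le_one⟩ ⟨zero_le_one, le_rfl⟩ zero_le_one
  simpa [g] using this

/-- The three angles plugged into the objective. -/
def FF (x y z : ℝ) : ℝ :=
  GG x y z (ang (exp x) (exp y) (exp z)) (ang (exp y) (exp z) (exp x))
    (ang (exp z) (exp x) (exp y))

lemma ang_continuous {X : Type*} [TopologicalSpace X] {f g h : X → ℝ} (hf : Continuous f)
    (hg : Continuous g) (hh : Continuous h) :
    Continuous fun t => ang (exp (f t)) (exp (g t)) (exp (h t)) := by
  unfold ang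
  apply Real.continuous_arccos.comp
  apply Continuous.div
  · fun_prop
  · fun_prop
  · intro t; positivity

lemma GG_le_FF_nondeg {x y z a b c : ℝ}
    (h1 : exp x < exp y + exp z) (h2 : exp y < exp x + exp z) (h3 : exp z < exp x + exp y)
    (ha : 0 ≤ a) (hb : 0 ≤ b) (hc : 0 ≤ c) (hs : a + b + c = Real.pi) :
    GG x y z a b c ≤ FF x y z := by
  have px := exp_pos x
  have py := exp_pos y
  have pz := exp_pos z
  have hH := Real.sqrt_pos.2 (heron_pos px py pz h1 h2 h3)
  refine GG_le_nondeg (k := √(heron (exp x) (exp y) (exp z)) / (2 * exp x * exp y * exp z))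
    (by positivity) (ang_pos_lt px py pz h1 h2 h3).1
    (ang_pos_lt py pz px (by linarith) (by linarith) (by linarith)).1
    (ang_pos_lt pz px py (by linarith) (by linarith) (by linarith)).1
    (ang_sum px py pz) (sin_ang px py pz) ?_ ?_ ha hb hc hs
  · rw [sin_ang py pz px]
    have : heron (exp y) (exp z) (exp x) = heron (exp x) (exp y) (exp z) := by
      unfold heron; ring
    rw [this]
    congr 2; ring
  · rw [sin_ang pz px py]
    have : heron (exp z) (exp x) (exp y) = heron (exp x) (exp y) (exp z) := by
      unfold heron; ring
    rw [this]
    congr 2; ring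

lemma FF_continuous (y z : ℝ) : Continuous fun x => FF x y z := by
  have h1 : Continuous fun x : ℝ => ang (exp x) (exp y) (exp z) :=
    ang_continuous continuous_id continuous_const continuous_const
  have h2 : Continuous fun x : ℝ => ang (exp y) (exp z) (exp x) :=
    ang_continuous continuous_const continuous_const continuous_id
  have h3 : Continuous fun x : ℝ => ang (exp z) (exp x) (exp y) :=
    ang_continuous continuous_const continuous_id continuous_const
  have := lob_continuous
  unfold FF GG
  fun_prop

lemma GG_le_FF_deg {x y z a b c : ℝ} (h : exp y + exp z ≤ exp x)
    (ha : 0 ≤ a) (hb : 0 ≤ b) (hc : 0 ≤ c) (hs : a + b + c = Real.pi) :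
    GG x y z a b c ≤ FF x y z := by
  have px := exp_pos x
  have py := exp_pos y
  have pz := exp_pos z
  obtain ⟨w, hw⟩ : ∃ w, exp w = exp y + exp z :=
    ⟨Real.log (exp y + exp z), Real.exp_log (by positivity)⟩
  have hwx : w ≤ x := by
    rw [← Real.exp_le_exp, hw]; exact h
  have main : GG w y z a b c ≤ FF w y z := by
    have c1 : Continuous fun x => GG x y z a b c := by unfold GG; fun_prop
    have t1 : Tendsto (fun x => GG x y z a b c) (nhdsWithin w (Iio w)) (nhds (GG w y z a b c)) :=
      (c1.tendsto w).mono_left nhdsWithin_le_nhds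
    have t2 : Tendsto (fun x => FF x y z) (nhdsWithin w (Iio w)) (nhds (FF w y z)) :=
      ((FF_continuous y z).tendsto w).mono_left nhdsWithin_le_nhds
    refine le_of_tendsto_of_tendsto t1 t2 ?_
    have e1 : ∀ᶠ v in nhdsWithin w (Iio w), exp y < exp v + exp z := by
      apply Filter.Eventually.filter_mono nhdsWithin_le_nhds
      have : Continuous fun v : ℝ => exp v + exp z := by fun_prop
      exact (this.tendsto w).eventually_const_lt (by linarith)
    have e2 : ∀ᶠ v in nhdsWithin w (Iio w), exp z < exp v + exp y := by
      apply Filter.Eventually.filter_mono nhdsWithin_le_nhds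
      have : Continuous fun v : ℝ => exp v + exp y := by fun_prop
      exact (this.tendsto w).eventually_const_lt (by linarith)
    filter_upwards [e1, e2, self_mem_nhdsWithin] with v hv1 hv2 hv3
    refine GG_le_FF_nondeg ?_ hv1 hv2 ha hb hc hs
    rw [← hw]
    exact Real.exp_lt_exp.2 hv3
  have pw := exp_pos w
  unfold FF at main ⊢
  rw [ang_eq_pi py pz hw.ge, ang_comm (exp y), ang_eq_zero py pw pz hw.ge,
    ang_eq_zero pz pw py (by linarith)] at main
  rw [ang_eq_pi py pz h, ang_comm (exp y), ang_eq_zero py px pz h,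
    ang_eq_zero pz px py (by linarith)]
  unfold GG at main ⊢
  have : 0 ≤ (Real.pi - a) * (x - w) := mul_nonneg (by linarith) (by linarith)
  linarith

lemma GG_le_FF {x y z a b c : ℝ}
    (ha : 0 ≤ a) (hb : 0 ≤ b) (hc : 0 ≤ c) (hs : a + b + c = Real.pi) :
    GG x y z a b c ≤ FF x y z := by
  by_cases h1 : exp y + exp z ≤ exp x
  · exact GG_le_FF_deg h1 ha hb hc hs
  by_cases h2 : exp z + exp x ≤ exp y
  · have := GG_le_FF_deg h2 hb hc ha (by linarith)
    unfold FF GG at *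
    linarith
  by_cases h3 : exp x + exp y ≤ exp z
  · have := GG_le_FF_deg h3 hc ha hb (by linarith)
    unfold FF GG at *
    linarith
  exact GG_le_FF_nondeg (by linarith) (by linarith) (by linarith) ha hb hc hs

/-! ### Co-volume -/

lemma triSides_pos (l : Fin 6 → ℝ) (k : Fin 3) : 0 < triSides l k := by
  unfold triSides; split_ifs <;> positivity

lemma dihedral_zero (l : Fin 6 → ℝ) : genAngle (triSides l) 0 =
    ang (exp ((l 0 + l 5) / 2)) (exp ((l 1 + l 4) / 2)) (exp ((l 2 + l 3) / 2)) := by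
  rw [genAngle_eq _ (triSides_pos l)]
  simp [triSides]

lemma dihedral_one (l : Fin 6 → ℝ) : genAngle (triSides l) 1 =
    ang (exp ((l 1 + l 4) / 2)) (exp ((l 2 + l 3) / 2)) (exp ((l 0 + l 5) / 2)) := by
  rw [genAngle_eq _ (triSides_pos l)]
  simp [triSides]

lemma dihedral_two (l : Fin 6 → ℝ) : genAngle (triSides l) 2 =
    ang (exp ((l 2 + l 3) / 2)) (exp ((l 0 + l 5) / 2)) (exp ((l 1 + l 4) / 2)) := by
  rw [genAngle_eq _ (triSides_pos l)]
  simp [triSides]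

lemma dihedral_continuous (p : Fin 6) : Continuous fun l => dihedral l p := by
  unfold dihedral
  generalize quadIndex p = k
  fin_cases k
  · simp only [Fin.zero_eta, dihedral_zero]
    apply ang_continuous <;> fun_prop
  · simp only [Fin.mk_one, dihedral_one]
    apply ang_continuous <;> fun_prop
  · simp only [Fin.reduceFinMk, dihedral_two]
    apply ang_continuous <;> fun_prop

lemma cov6_subgrad (l m : Fin 6 → ℝ) :
    cov6 l + ∑ p, dihedral l p * (m p - l p) ≤ cov6 m := by
  have key := GG_le_FF (x := (m 0 + m 5) / 2) (y := (m 1 + m 4) / 2) (z := (m 2 + m 3) / 2)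
    (a := genAngle (triSides l) 0) (b := genAngle (triSides l) 1) (c := genAngle (triSides l) 2)
    (by rw [dihedral_zero]; exact Real.arccos_nonneg _)
    (by rw [dihedral_one]; exact Real.arccos_nonneg _)
    (by rw [dihedral_two]; exact Real.arccos_nonneg _)
    (by rw [dihedral_zero, dihedral_one, dihedral_two]
        exact ang_sum (exp_pos _) (exp_pos _) (exp_pos _))
  unfold FF at key
  rw [← dihedral_zero, ← dihedral_one, ← dihedral_two] at key
  unfold GG at key
  simp only [cov6, vol6, dihedral, Fin.sum_univ_six]
  simp only [show quadIndex 0 = 0 from rfl, show quadIndex 1 = 1 from rfl,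
    show quadIndex 2 = 2 from rfl, show quadIndex 3 = 2 from rfl,
    show quadIndex 4 = 1 from rfl, show quadIndex 5 = 0 from rfl]
  linarith

/-! ### Functions with a continuous subgradient -/

/-- The linear functional with coefficients `v`. -/
def linF {E : Type*} [Fintype E] (v : E → ℝ) : (E → ℝ) →L[ℝ] ℝ :=
  ∑ e, v e • (ContinuousLinearMap.proj e : (E → ℝ) →L[ℝ] ℝ)

lemma linF_apply {E : Type*} [Fintype E] (v w : E → ℝ) : linF v w = ∑ e, v e * w e := by
  simp [linF]

lemma subgrad_convex {V : Type*} [NormedAddCommGroup V] [NormedSpace ℝ V] {f : V → ℝ}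
    {D : V → V →L[ℝ] ℝ} (h : ∀ l m, f l + D l (m - l) ≤ f m) : ConvexOn ℝ univ f := by
  refine ⟨convex_univ, ?_⟩
  intro x _ y _ a b ha hb hab
  have h1 := mul_le_mul_of_nonneg_left (h (a • x + b • y) x) ha
  have h2 := mul_le_mul_of_nonneg_left (h (a • x + b • y) y) hb
  have h3 : a * D (a • x + b • y) (x - (a • x + b • y))
      + b * D (a • x + b • y) (y - (a • x + b • y)) = 0 := by
    simp only [map_sub, map_add, map_smul, smul_eq_mul]
    have : b = 1 - a := by linarith
    subst this
    ring
  have h4 : f (a • x + b • y) = a * f (a • x + b • y) + b * f (a • x + b • y) := by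
    rw [← add_mul, hab, one_mul]
  simp only [smul_eq_mul]
  linarith

lemma subgrad_hasFDerivAt {V : Type*} [NormedAddCommGroup V] [NormedSpace ℝ V] {f : V → ℝ}
    {D : V → V →L[ℝ] ℝ} (h : ∀ l m, f l + D l (m - l) ≤ f m) (hD : Continuous D) (l : V) :
    HasFDerivAt f (D l) l := by
  rw [hasFDerivAt_iff_isLittleO, Asymptotics.isLittleO_iff]
  intro c hc
  have : ∀ᶠ m in nhds l, dist (D m) (D l) < c := Metric.continuous_iff'.1 hD l c hc
  filter_upwards [this] with m hm
  have h1 := h l m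
  have h2 := h m l
  have h3 : (D m - D l) (m - l) ≤ c * ‖m - l‖ := by
    calc (D m - D l) (m - l) ≤ ‖(D m - D l) (m - l)‖ := le_abs_self _
      _ ≤ ‖D m - D l‖ * ‖m - l‖ := ContinuousLinearMap.le_opNorm _ _
      _ ≤ c * ‖m - l‖ := by
        rw [dist_eq_norm] at hm
        gcongr
  have h4 : D m (l - m) = - D m (m - l) := by rw [← map_neg, neg_sub]
  rw [sub_apply] at h3
  rw [Real.norm_eq_abs, abs_of_nonneg (by linarith)]
  linarith

lemma Htilde_subgrad [Fintype T] [Fintype E] [DecidableEq E] (glue : T → Fin 6 → E)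
    (l m : E → ℝ) :
    Htilde glue l + linF (fun e => - Ric glue l e) (m - l) ≤ Htilde glue m := by
  have h1 : ∑ σ : T, (cov6 (pullback glue l σ) + ∑ p, dihedral (pullback glue l σ) p *
      (m (glue σ p) - l (glue σ p))) ≤ ∑ σ : T, cov6 (pullback glue m σ) :=
    Finset.sum_le_sum fun σ _ => cov6_subgrad (pullback glue l σ) (pullback glue m σ)
  rw [Finset.sum_add_distrib] at h1
  have h2 : linF (fun e => - Ric glue l e) (m - l) =
      (∑ σ : T, ∑ p, dihedral (pullback glue l σ) p * (m (glue σ p) - l (glue σ p)))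
      - 2 * Real.pi * ∑ e, m e + 2 * Real.pi * ∑ e, l e := by
    rw [linF_apply]
    have : ∀ e, - Ric glue l e * (m - l) e = (∑ σ : T, ∑ p : Fin 6,
        if glue σ p = e then dihedral (pullback glue l σ) p * (m e - l e) else 0)
        - 2 * Real.pi * m e + 2 * Real.pi * l e := by
      intro e
      have : (∑ σ : T, ∑ p : Fin 6,
        if glue σ p = e then dihedral (pullback glue l σ) p * (m e - l e) else 0) =
        (∑ σ : T, ∑ p : Fin 6,
          if glue σ p = e then dihedral (pullback glue l σ) p else 0) * (m e - l e) := by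
        rw [Finset.sum_mul]
        refine Finset.sum_congr rfl fun σ _ => ?_
        rw [Finset.sum_mul]
        refine Finset.sum_congr rfl fun p _ => ?_
        split_ifs <;> ring
      rw [this, Ric, Pi.sub_apply]
      ring
    rw [Finset.sum_congr rfl fun e _ => this e, Finset.sum_add_distrib, Finset.sum_sub_distrib,
      ← Finset.mul_sum, ← Finset.mul_sum, Finset.sum_comm]
    congr 2
    refine Finset.sum_congr rfl fun σ _ => ?_
    rw [Finset.sum_comm]
    refine Finset.sum_congr rfl fun p _ => ?_
    simp
  rw [h2]
  unfold Htilde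
  linarith

lemma Ric_continuous [Fintype T] [DecidableEq E] (glue : T → Fin 6 → E) (e : E) :
    Continuous fun l => Ric glue l e := by
  unfold Ric
  refine continuous_const.sub (continuous_finsetSum _ fun σ _ => continuous_finsetSum _ fun p _ => ?_)
  split_ifs
  · apply (dihedral_continuous p).comp
    unfold pullback
    fun_prop
  · exact continuous_const


/-- `H̃` is `C¹` and convex with `∂H̃/∂l_e = −K̃_e`; consequently `l` has zero
generalized Ricci curvature iff `l` is a critical point of `H̃`. -/
theorem Htilde_C1_convex_deriv_critical
    [Fintype T] [Fintype E] [DecidableEq E] [Nonempty T] (glue : T → Fin 6 → E) :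
    ContDiff ℝ 1 (Htilde glue) ∧ ConvexOn ℝ Set.univ (Htilde glue) ∧
    (∀ (l : E → ℝ) (e : E),
      fderiv ℝ (Htilde glue) l (Pi.single e 1) = - Ric glue l e) ∧
    (∀ l : E → ℝ, (∀ e : E, Ric glue l e = 0) ↔ fderiv ℝ (Htilde glue) l = 0) := by
  have hsub := Htilde_subgrad glue
  have hD : Continuous fun l : E → ℝ => linF (fun e => - Ric glue l e) := by
    unfold linF
    exact continuous_finsetSum _ fun e _ => (Ric_continuous glue e).neg.smul continuous_const
  have hF := subgrad_hasFDerivAt (D := fun l => linF (fun e => - Ric glue l e)) hsub hD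
  have hev : ∀ (l : E → ℝ) (e : E),
      fderiv ℝ (Htilde glue) l (Pi.single e 1) = - Ric glue l e := by
    intro l e
    rw [(hF l).fderiv, linF_apply]
    simp [Pi.single_apply]
  refine ⟨contDiff_one_iff_hasFDerivAt.2 ⟨_, hD, hF⟩,
    subgrad_convex (D := fun l => linF (fun e => - Ric glue l e)) hsub, hev, ?_⟩
  intro l
  constructor
  · intro h
    rw [(hF l).fderiv]
    ext w
    simp [linF_apply, h]
  · intro h e
    have := hev l e
    rw [h] at this
    simpa using this.symm
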